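/- Fix integers n ≥ 1 and d ≥ 1, and define φ : ℂ^{n+1} → ℂ by the absolutely convergent series φ(X) = Σ_{k=0}^∞ (n!(n-d+1)^k/(n+k)!) Σ_{α_0+⋯+α_n=k} (X^0)^{α_0} ⋯ (X^n)^{α_n}. Let λ : ℂ^{n+1} → ℂ be a linear map and define σ : ℂ^{n+1} → ℂ by σ(X) = (-(n-d+1)λ(X)/n + d)·φ(X) + (d/n)·Σ_{i=0}^n X^i ∂φ/∂X^i(X). Then σ(0) = d, the partial derivatives of σ at 0 are ∂σ/∂X^i(0) = -(n-d+1)λ(e_i)/n + d(n-d+1)/n (where e_i is the i-th standard basis vector), and consequently for every v = (v^0, …, v^n) ∈ ℂ^{n+1} with Σ_{i=0}^n v^i = 0 and λ(v) = κ one has -(n-d+1)^{n-1} d (κ + Σ_{i=0}^n v^i ∂σ/∂X^i(0)/σ(0)) = -(n-d+1)^{n-1} ((n+1)(d-1)/n) κ. -/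

import Mathlib

/-- The complete homogeneous symmetric polynomial of degree `k` in `m` variables, as a function. -/
noncomputable def completeHomogeneous (m k : ℕ) (X : Fin m → ℂ) : ℂ :=
  ∑ α ∈ Finset.Nat.antidiagonalTuple m k, ∏ i, X i ^ α i

lemma exists_continuousMultilinearMap_monomial {m k : ℕ} (α : Fin m → ℕ) (hα : ∑ i, α i = k) :
    ∃ p : ContinuousMultilinearMap ℂ (fun _ : Fin k => Fin m → ℂ) ℂ,
      ‖p‖ ≤ 1 ∧ ∀ X : Fin m → ℂ, p (fun _ => X) = ∏ i, X i ^ α i := by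
  subst hα
  let w : Fin (∑ i, α i) → Fin m := fun j => (finSigmaFinEquiv.symm j).1
  refine ⟨(ContinuousMultilinearMap.mkPiAlgebra ℂ (Fin (∑ i, α i)) ℂ).compContinuousLinearMap
    (fun j => ContinuousLinearMap.proj (w j)), ?_, fun X => ?_⟩
  · refine ContinuousMultilinearMap.opNorm_le_bound zero_le_one fun x => ?_
    simp only [ContinuousMultilinearMap.compContinuousLinearMap_apply,
      ContinuousMultilinearMap.mkPiAlgebra_apply, ContinuousLinearMap.proj_apply, one_mul, norm_prod]
    exact Finset.prod_le_prod (fun _ _ => norm_nonneg _) fun j _ => norm_le_pi_norm _ _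
  · simp only [ContinuousMultilinearMap.compContinuousLinearMap_apply,
      ContinuousMultilinearMap.mkPiAlgebra_apply, ContinuousLinearMap.proj_apply, w]
    rw [Equiv.prod_comp finSigmaFinEquiv.symm (fun s : (i : Fin m) × Fin (α i) => X s.1),
      Fintype.prod_sigma]
    simp

lemma card_antidiagonalTuple_le (m k : ℕ) :
    (Finset.Nat.antidiagonalTuple m k).card ≤ (2 ^ m) ^ k := by
  have hsub : Finset.Nat.antidiagonalTuple m k ⊆
      Fintype.piFinset fun _ : Fin m => Finset.range (k + 1) := by
    intro α hα
    rw [Finset.Nat.mem_antidiagonalTuple] at hα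
    simp only [Fintype.mem_piFinset, Finset.mem_range, Nat.lt_succ_iff]
    intro i
    exact hα ▸ Finset.single_le_sum (fun _ _ => Nat.zero_le _) (Finset.mem_univ i)
  calc _ ≤ _ := Finset.card_le_card hsub
    _ = (k + 1) ^ m := by simp
    _ ≤ (2 ^ k) ^ m := Nat.pow_le_pow_left Nat.lt_two_pow_self m
    _ = (2 ^ m) ^ k := by rw [← pow_mul, ← pow_mul, mul_comm]

lemma exists_continuousMultilinearMap_completeHomogeneous (m k : ℕ) :
    ∃ p : ContinuousMultilinearMap ℂ (fun _ : Fin k => Fin m → ℂ) ℂ,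
      ‖p‖ ≤ (2 ^ m) ^ k ∧ ∀ X : Fin m → ℂ, p (fun _ => X) = completeHomogeneous m k X := by
  choose! q hq_norm hq using fun (α : Fin m → ℕ) (hα : ∑ i, α i = k) =>
    exists_continuousMultilinearMap_monomial α hα
  refine ⟨∑ α ∈ Finset.Nat.antidiagonalTuple m k, q α, ?_, fun X => ?_⟩
  · calc _ ≤ ∑ α ∈ Finset.Nat.antidiagonalTuple m k, ‖q α‖ := norm_sum_le _ _
      _ ≤ ∑ α ∈ Finset.Nat.antidiagonalTuple m k, (1 : ℝ) :=
        Finset.sum_le_sum fun α hα => hq_norm α (Finset.Nat.mem_antidiagonalTuple.1 hα)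
      _ ≤ (2 ^ m) ^ k := by
        simpa using mod_cast card_antidiagonalTuple_le m k
  · rw [sum_apply]
    exact Finset.sum_congr rfl fun α hα => hq α (Finset.Nat.mem_antidiagonalTuple.1 hα) X

lemma completeHomogeneous_zero (m : ℕ) (X : Fin m → ℂ) : completeHomogeneous m 0 X = 1 := by
  simp [completeHomogeneous, Finset.Nat.antidiagonalTuple_zero_right]

lemma completeHomogeneous_one (m : ℕ) (X : Fin m → ℂ) :
    completeHomogeneous m 1 X = ∑ i, X i := by
  have himage : Finset.Nat.antidiagonalTuple m 1 =
      Finset.univ.image fun i : Fin m => (Pi.single i 1 : Fin m → ℕ) := by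
    ext α
    simp only [Finset.Nat.mem_antidiagonalTuple, Finset.mem_image, Finset.mem_univ, true_and]
    constructor
    · intro h
      obtain ⟨i, -, hi⟩ := Finset.exists_ne_zero_of_sum_ne_zero (h.trans_ne one_ne_zero)
      rw [← Finset.add_sum_erase _ _ (Finset.mem_univ i)] at h
      have hzero : ∑ j ∈ Finset.univ.erase i, α j = 0 := by omega
      refine ⟨i, funext fun j => ?_⟩
      rcases eq_or_ne j i with rfl | hj
      · rw [Pi.single_eq_same]; omega
      · rw [Pi.single_eq_of_ne hj]
        exact (Finset.sum_eq_zero_iff.1 hzero j (by simp [hj])).symm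
    · rintro ⟨i, rfl⟩
      simp
  rw [completeHomogeneous, himage, Finset.sum_image]
  · refine Finset.sum_congr rfl fun i _ => ?_
    rw [Finset.prod_eq_single i] <;> simp +contextual [Pi.single_eq_of_ne]
  · intro i _ j _ h
    by_contra hij
    simpa [Pi.single_eq_of_ne hij] using congrFun h i

lemma exists_hasFPowerSeriesAt_tsum_completeHomogeneous (m : ℕ) {a : ℕ → ℂ} {B : ℝ} (hB : 0 ≤ B)
    (ha : ∀ k, ‖a k‖ ≤ B ^ k) :
    ∃ p : FormalMultilinearSeries ℂ (Fin m → ℂ) ℂ,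
      HasFPowerSeriesAt (fun X => ∑' k, a k * completeHomogeneous m k X) p 0 ∧
        ∀ k X, p k (fun _ => X) = a k * completeHomogeneous m k X := by
  choose q hq_norm hq using exists_continuousMultilinearMap_completeHomogeneous m
  let p : FormalMultilinearSeries ℂ (Fin m → ℂ) ℂ := fun k => a k • q k
  have hp : ∀ k X, p k (fun _ => X) = a k * completeHomogeneous m k X := fun k X => by
    simp [p, hq]
  have hp_norm : ∀ k, ‖p k‖ ≤ B ^ k * (2 ^ m) ^ k := fun k =>
    (norm_smul (a k) (q k)).trans_le
      (mul_le_mul (ha k) (hq_norm k) (norm_nonneg (q k)) (pow_nonneg hB k))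
  have hradius : 0 < p.radius := by
    set C : ℝ := B * 2 ^ m with hC
    have hC0 : 0 ≤ C := by positivity
    let r : NNReal := ⟨(C + 1)⁻¹, by positivity⟩
    have hr : 0 < r := NNReal.coe_pos.1 (by change 0 < (C + 1)⁻¹; positivity)
    refine lt_of_lt_of_le (ENNReal.coe_pos.2 hr) (p.le_radius_of_bound 1 fun k => ?_)
    have hCr : C * r ≤ 1 := by
      change C * (C + 1)⁻¹ ≤ 1
      rw [← div_eq_mul_inv, div_le_one (by positivity)]
      linarith
    calc ‖p k‖ * (r : ℝ) ^ k ≤ (B ^ k * (2 ^ m) ^ k) * (r : ℝ) ^ k := by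
          exact mul_le_mul_of_nonneg_right (hp_norm k) (pow_nonneg r.coe_nonneg k)
      _ = (C * r) ^ k := by rw [hC, mul_pow, mul_pow]
      _ ≤ 1 := pow_le_one₀ (mul_nonneg hC0 r.coe_nonneg) hCr
  refine ⟨p, ?_, hp⟩
  have hsum : p.sum = fun X => ∑' k, a k * completeHomogeneous m k X :=
    funext fun X => tsum_congr fun k => hp k X
  exact hsum ▸ (p.hasFPowerSeriesOnBall hradius).hasFPowerSeriesAt

/-- The derivative of `X ↦ X i * g X` at `0` is `g 0 • dX i`. -/
lemma hasFDerivAt_coord_mul_zero {m : ℕ} {g : (Fin m → ℂ) → ℂ} (hg : DifferentiableAt ℂ g 0)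
    (i : Fin m) :
    HasFDerivAt (fun X : Fin m → ℂ => X i * g X)
      (g 0 • ContinuousLinearMap.proj (R := ℂ) (φ := fun _ : Fin m => ℂ) i) 0 := by
  refine ((hasFDerivAt_apply i (0 : Fin m → ℂ)).fun_mul hg.hasFDerivAt).congr_fderiv ?_
  ext
  simp

/-- The algebraic computation at `X = 0` proving the Corollary of the paper (the value of the
classical Futaki invariant of a degree-`d` hypersurface of `ℂP^n`): with
`φ(X) = Σ_k (n!(n-d+1)^k/(n+k)!) Σ_{|α|=k} X^α`, `λ : ℂ^{n+1} → ℂ` linear, and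
`σ(X) = (-(n-d+1)λ(X)/n + d)φ(X) + (d/n) Σ_i X^i ∂φ/∂X^i(X)`, one has `σ(0) = d`,
`∂σ/∂X^i(0) = -(n-d+1)λ(e_i)/n + d(n-d+1)/n`, and consequently for every `v` with
`Σ_i v^i = 0` and `λ(v) = κ`,
`-(n-d+1)^{n-1} d (κ + Σ_i v^i ∂σ/∂X^i(0)/σ(0)) = -(n-d+1)^{n-1} ((n+1)(d-1)/n) κ`. -/
theorem futaki_invariant_hypersurface (n d : ℕ) (hn : 1 ≤ n) (hd : 1 ≤ d)
    (lam : (Fin (n + 1) → ℂ) →ₗ[ℂ] ℂ) :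
    let c : ℂ := (n : ℂ) - (d : ℂ) + 1
    let φ : (Fin (n + 1) → ℂ) → ℂ := fun X =>
      ∑' k : ℕ, ((Nat.factorial n : ℂ) * c ^ k / (Nat.factorial (n + k) : ℂ)) *
        ∑ α ∈ Finset.Nat.antidiagonalTuple (n + 1) k, ∏ i, X i ^ α i
    let σ : (Fin (n + 1) → ℂ) → ℂ := fun X =>
      (-(c * lam X) / (n : ℂ) + (d : ℂ)) * φ X +
        ((d : ℂ) / (n : ℂ)) * ∑ i, X i * fderiv ℂ φ X (Pi.single i 1)
    σ 0 = (d : ℂ) ∧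
    (∀ i : Fin (n + 1),
      fderiv ℂ σ 0 (Pi.single i 1) =
        -(c * lam (Pi.single i 1)) / (n : ℂ) + (d : ℂ) * c / (n : ℂ)) ∧
    (∀ (v : Fin (n + 1) → ℂ) (κ : ℂ), ∑ i, v i = 0 → lam v = κ →
      -c ^ (n - 1) * (d : ℂ) *
          (κ + ∑ i, v i * fderiv ℂ σ 0 (Pi.single i 1) / σ 0) =
        -c ^ (n - 1) * (((n : ℂ) + 1) * ((d : ℂ) - 1) / (n : ℂ)) * κ) := by
  intro c φ σ
  have hn0 : (n : ℂ) ≠ 0 := by exact_mod_cast (by omega : n ≠ 0)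
  have hn1 : (n : ℂ) + 1 ≠ 0 := by exact_mod_cast n.succ_ne_zero
  have hd0 : (d : ℂ) ≠ 0 := by exact_mod_cast (by omega : d ≠ 0)
  have hcoeff : ∀ k : ℕ, ‖(Nat.factorial n : ℂ) * c ^ k / (Nat.factorial (n + k) : ℂ)‖ ≤
      ‖c‖ ^ k := fun k => by
    have hle : (Nat.factorial n : ℝ) ≤ Nat.factorial (n + k) := by
      exact_mod_cast Nat.factorial_le (Nat.le_add_right n k)
    rw [norm_div, norm_mul, norm_pow, Complex.norm_natCast, Complex.norm_natCast,
      div_le_iff₀ (by positivity), mul_comm]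
    gcongr
  obtain ⟨p, hp, hp_apply⟩ :=
    exists_hasFPowerSeriesAt_tsum_completeHomogeneous (n + 1) (norm_nonneg c) hcoeff
  change HasFPowerSeriesAt φ p 0 at hp
  have hφ0 : φ 0 = 1 := by
    rw [← hp.coeff_zero (fun _ => 0), hp_apply, completeHomogeneous_zero]
    simp [Nat.factorial_ne_zero]
  have hφ' : ∀ i, fderiv ℂ φ 0 (Pi.single i 1) = c / (n + 1) := fun i => by
    have hp1 : fderiv ℂ φ 0 (Pi.single i 1) = p 1 (fun _ => Pi.single i 1) := by
      rw [hp.fderiv_eq]; rfl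
    rw [hp1, hp_apply, completeHomogeneous_one, Nat.factorial_succ]
    have hfac : (Nat.factorial n : ℂ) ≠ 0 := by exact_mod_cast n.factorial_ne_zero
    simp only [Finset.sum_pi_single', Finset.mem_univ, if_true, pow_one, mul_one]
    push_cast
    field_simp
  have hφ_analytic : AnalyticAt ℂ φ 0 := ⟨p, hp⟩
  have hpartial : ∀ i, DifferentiableAt ℂ (fun X => fderiv ℂ φ X (Pi.single i 1)) 0 := fun i =>
    hφ_analytic.fderiv.differentiableAt.clm_apply (differentiableAt_const _)
  have hσ0 : σ 0 = d := by simp [σ, hφ0]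
  have hlinear : HasFDerivAt (fun X => -(c * lam X) / (n : ℂ) + (d : ℂ))
      ((-(c / n)) • lam.toContinuousLinearMap) 0 := by
    have h := (((-(c / n)) • lam.toContinuousLinearMap).hasFDerivAt (x := 0)).add_const (d : ℂ)
    refine h.congr_of_eventuallyEq (Filter.Eventually.of_forall fun X => ?_)
    simp only [FunLike.coe_smul, Pi.smul_apply, LinearMap.coe_toContinuousLinearMap', smul_eq_mul]
    ring
  have hσ' : ∀ i : Fin (n + 1), fderiv ℂ σ 0 (Pi.single i 1) =
      -(c * lam (Pi.single i 1)) / (n : ℂ) + (d : ℂ) * c / (n : ℂ) := fun i => by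
    have hσ : HasFDerivAt σ _ 0 :=
      (hlinear.mul hφ_analytic.differentiableAt.hasFDerivAt).add
        ((HasFDerivAt.fun_sum fun j (_ : j ∈ Finset.univ) =>
          hasFDerivAt_coord_mul_zero (hpartial j) j).const_mul ((d : ℂ) / n))
    rw [hσ.fderiv]
    simp [hφ0, hφ', ← Finset.mul_sum]
    field_simp
    ring
  refine ⟨hσ0, hσ', fun v κ hv hκ => ?_⟩
  have hlam : ∑ i, v i * lam (Pi.single i 1) = κ := by
    rw [← hκ, lam.pi_apply_eq_sum_univ v]
    refine Finset.sum_congr rfl fun i _ => ?_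
    rw [smul_eq_mul]
    congr 2
    ext j
    simp [Pi.single_apply, eq_comm]
  have hsum : ∑ i, v i * fderiv ℂ σ 0 (Pi.single i 1) / σ 0 = -(c / (n * d)) * κ := by
    calc _ = ∑ i, (-(c / (n * d)) * (v i * lam (Pi.single i 1)) + c / n * v i) :=
          Finset.sum_congr rfl fun i _ => by
            rw [hσ', hσ0]
            field_simp
      _ = _ := by
          rw [Finset.sum_add_distrib, ← Finset.mul_sum, ← Finset.mul_sum, hlam, hv]
          ring
  rw [hsum]
  have hkey : (d : ℂ) * (κ + -(c / (n * d)) * κ) = ((n : ℂ) + 1) * (d - 1) / n * κ := by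
    simp only [c]
    field_simp
    ring
  rw [mul_assoc, hkey]
  ring
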